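/- arXiv:2203.04418 — 5 statements merged into one kernel-verified Lean document; each statement's English description precedes it below -/
import Mathlib

section
/- Let X be a finite set with |X| = n and μ a positive measure on 2^X. For any acyclic orders ≿ and ⊵ on X with asymmetric parts ≻ and ⊳, D^μ(≿,⊵) = Σ_{x ∈ X} [ 2^{n − |x^{↑,⊳}| − 1} + 2^{n − |x^{↑,≻}| − 1} − 2^{α_x(≿,⊵) + 1} ] · μ({x}), where x^{↑,≻} := {a ∈ X : a ≻ x}, x^{↑,⊳} := {a ∈ X : a ⊳ x}, and α_x(≿,⊵) := |{a ∈ X \ {x} : not a ≻ x and not a ⊳ x}|. -/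
open Classical Finset symmDiff

section PrefDefs

variable {X : Type*}

/-- The asymmetric part `R^>` of a binary relation `R`. -/
def asymPart (R : X → X → Prop) : X → X → Prop := fun x y => R x y ∧ ¬ R y x

/-- `R` is acyclic: there is no cycle of pairwise distinct elements
`z_0 R^> z_1 R^> ⋯ R^> z_k R^> z_0`. -/
def AcyclicRel (R : X → X → Prop) : Prop :=
  ¬ ∃ (k : ℕ) (z : Fin (k + 1) → X), Function.Injective z ∧
      ∀ i : Fin (k + 1), asymPart R (z i) (z (i + 1))

/-- An acyclic order: a reflexive acyclic binary relation. -/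
def AcyclicOrd (R : X → X → Prop) : Prop := Reflexive R ∧ AcyclicRel R

/-- `M(S,R)`: the set of `R`-maximal elements of `S`. -/
noncomputable def MaxSet [DecidableEq X] (S : Finset X) (R : X → X → Prop) : Finset X :=
  S.filter fun x => ∀ y ∈ S, ¬ asymPart R y x

/-- The μ-top-difference semimetric, where the measure μ is given by the
weights `w x = μ {x}`. -/
noncomputable def Dmu [Fintype X] [DecidableEq X] (w : X → ℝ) (R R' : X → X → Prop) : ℝ :=
  ∑ S : Finset X, ∑ x ∈ symmDiff (MaxSet S R) (MaxSet S R'), w x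

/-- The top-difference semimetric `D`. -/
noncomputable def Dtop [Fintype X] [DecidableEq X] (R R' : X → X → Prop) : ℕ :=
  ∑ S : Finset X, (symmDiff (MaxSet S R) (MaxSet S R')).card

/-- `≿ ⊕ (a,b)`: if `b ∼ a` delete `(b,a)`, if `a, b` are `≿`-incomparable add `(a,b)`. -/
def oplusR (R : X → X → Prop) (a b : X) : X → X → Prop :=
  fun x y => (R x y ∧ ¬(R b a ∧ x = b ∧ y = a)) ∨ (¬ R b a ∧ x = a ∧ y = b)

/-- `≿ ⊖ (a,b)`: delete the pair `(a,b)`. -/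
def ominusR (R : X → X → Prop) (a b : X) : X → X → Prop :=
  fun x y => R x y ∧ ¬(x = a ∧ y = b)

/-- `≿ → ≿_0 ↠ ⊵` : `R0` is a one-step perturbation of `R` toward `R'`. -/
def OneStep (R R0 R' : X → X → Prop) : Prop :=
  AcyclicOrd R0 ∧
  ((∃ a b, asymPart R a b ∧ ¬ asymPart R' a b ∧
      (∀ x, asymPart R' x b → asymPart R x b) ∧ R0 = ominusR R a b) ∨
   (∃ a b, ¬ asymPart R a b ∧ ¬ asymPart R b a ∧ asymPart R' a b ∧ R0 = oplusR R a b))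

/-- `Q` is in-between `R` and `R'` : `Q` is an n-step perturbation of `R` toward `R'`
for some positive integer n. -/
def InBetween (R R' Q : X → X → Prop) : Prop :=
  ∃ (n : ℕ) (c : Fin (n + 1) → (X → X → Prop)),
    OneStep R (c 0) R' ∧
    (∀ i : Fin n, OneStep (c i.castSucc) (c i.succ) R') ∧
    c (Fin.last n) = Q

/-- `N(b,≿)`: the number of `x ≠ b` with not `x ≻ b`. -/
noncomputable def Nnum [Fintype X] (R : X → X → Prop) (b : X) : ℕ :=
  (Finset.univ.filter fun x => x ≠ b ∧ ¬ asymPart R x b).card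

/-- `≿_{ab}`: the partial order whose asymmetric part is `(X \ {a,b}) × {a,b}`. -/
def RabRel (a b : X) : X → X → Prop :=
  fun x y => x = y ∨ ((x ≠ a ∧ x ≠ b) ∧ (y = a ∨ y = b))

/-- `≿_{ab}^+`: as `≿_{ab}` but with `a` ranked strictly above `b`. -/
def RabPlusRel (a b : X) : X → X → Prop :=
  fun x y => RabRel a b x y ∨ (x = a ∧ y = b)

/-- `d` is a semimetric on the set of acyclic orders on `X`. -/
def IsSemimetricOn (d : (X → X → Prop) → (X → X → Prop) → ℝ) : Prop :=
  (∀ R R', AcyclicOrd R → AcyclicOrd R' → 0 ≤ d R R') ∧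
  (∀ R, AcyclicOrd R → d R R = 0) ∧
  (∀ R R', AcyclicOrd R → AcyclicOrd R' → d R R' = d R' R) ∧
  (∀ R R' R'', AcyclicOrd R → AcyclicOrd R' → AcyclicOrd R'' →
    d R R'' ≤ d R R' + d R' R'')

/-- Axiom 1. -/
def Axiom1 (d : (X → X → Prop) → (X → X → Prop) → ℝ) : Prop :=
  ∀ R R0 R' : X → X → Prop, AcyclicOrd R → AcyclicOrd R' →
    InBetween R R' R0 → d R R' = d R R0 + d R0 R'

/-- Axiom 2. -/
def Axiom2 (d : (X → X → Prop) → (X → X → Prop) → ℝ) : Prop :=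
  ∀ a b : X, a ≠ b → d (RabRel a b) (RabPlusRel a b) = 1

/-- Axiom 3. -/
def Axiom3 [Fintype X] (d : (X → X → Prop) → (X → X → Prop) → ℝ) : Prop :=
  (∀ (R : X → X → Prop) (a b : X), AcyclicOrd R → a ≠ b →
      ¬ asymPart R a b → ¬ asymPart R b a → AcyclicOrd (oplusR R a b) →
      d R (oplusR R a b) = (2 : ℝ) ^ (Nnum R b - 1) * d (RabRel a b) (RabPlusRel a b)) ∧
  (∀ (R : X → X → Prop) (a b : X), AcyclicOrd R → asymPart R a b →
      d R (ominusR R a b) = (2 : ℝ) ^ (Nnum R b) * d (RabRel a b) (RabPlusRel a b))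

/-- Axiom 4. -/
def Axiom4 (d : (X → X → Prop) → (X → X → Prop) → ℝ) : Prop :=
  ∀ R R' : X → X → Prop, AcyclicOrd R → AcyclicOrd R' →
    (∀ x y, asymPart R x y ↔ asymPart R' x y) → d R R' = 0

end PrefDefs


/-! A point `x` is maximal in `S` exactly when `{x} ⊆ S ⊆ {a | ¬ a ≻ x}`, so the sets in which `x`
is maximal form an interval of the Boolean lattice. Exchanging the sums in `Dmu` gives `w x` as
coefficient the number of sets lying in exactly one of the intervals of the two orders; intervals
with the same bottom meet in an interval, so that number is a combination of three powers of two. -/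

section Counting

theorem card_symmDiff_add_two_mul_card_inter {α : Type*} [DecidableEq α] (s t : Finset α) :
    #(s ∆ t) + 2 * #(s ∩ t) = #s + #t := by
  have hsymm : #(s ∆ t) = #(s \ t) + #(t \ s) := card_union_of_disjoint disjoint_sdiff_sdiff
  have hs : #(s \ t) + #(s ∩ t) = #s := card_sdiff_add_card_inter s t
  have ht : #(t \ s) + #(s ∩ t) = #t := inter_comm s t ▸ card_sdiff_add_card_inter t s
  omega

theorem card_Icc_symmDiff_Icc {K α : Type*} [Ring K] [DecidableEq α] {s t u : Finset α}
    (ht : s ⊆ t) (hu : s ⊆ u) :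
    (#(Icc s t ∆ Icc s u) : K) =
      2 ^ (#t - #s) + 2 ^ (#u - #s) - 2 ^ (#(t ∩ u) - #s + 1) := by
  have hinter : Icc s t ∩ Icc s u = Icc s (t ∩ u) := by
    ext v
    simp only [mem_inter, mem_Icc, subset_inter_iff]
    tauto
  have hcard := card_symmDiff_add_two_mul_card_inter (Icc s t) (Icc s u)
  rw [hinter, card_Icc_finset ht, card_Icc_finset hu, card_Icc_finset (subset_inter ht hu),
    ← pow_succ'] at hcard
  rw [eq_sub_iff_add_eq]
  simpa only [Nat.cast_add, Nat.cast_pow, Nat.cast_ofNat] using congrArg (Nat.cast (R := K)) hcard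

theorem sum_sum_eq_sum_card_nsmul {ι α M : Type*} [Fintype α] [DecidableEq α] [AddCommMonoid M]
    (s : Finset ι) (f : ι → Finset α) (w : α → M) :
    ∑ i ∈ s, ∑ x ∈ f i, w x = ∑ x, #{i ∈ s | x ∈ f i} • w x := by
  simp only [← sum_const]
  exact sum_comm' fun i x => by simp only [mem_filter, mem_univ, and_true]

end Counting

section StrictUpper

variable {X : Type*} [Fintype X]

/-- The set `x^{↑,≻}` of the elements strictly above `x`. -/
noncomputable def strictUpper (R : X → X → Prop) (x : X) : Finset X :=
  univ.filter fun a => asymPart R a x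

theorem mem_strictUpper {R : X → X → Prop} {a x : X} : a ∈ strictUpper R x ↔ asymPart R a x := by
  simp only [strictUpper, mem_filter, mem_univ, true_and]

variable [DecidableEq X]

theorem singleton_subset_compl_strictUpper (R : X → X → Prop) (x : X) :
    {x} ⊆ (strictUpper R x)ᶜ := by
  rw [singleton_subset_iff, mem_compl, mem_strictUpper]
  exact fun h => h.2 h.1

theorem mem_MaxSet_iff_mem_Icc {R : X → X → Prop} {S : Finset X} {x : X} :
    x ∈ MaxSet S R ↔ S ∈ Icc {x} (strictUpper R x)ᶜ := by
  simp only [MaxSet, mem_filter, mem_Icc, singleton_subset_iff, subset_iff (s₁ := S), mem_compl,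
    mem_strictUpper]

theorem filter_mem_symmDiff_MaxSet (R R' : X → X → Prop) (x : X) :
    ({S | x ∈ MaxSet S R ∆ MaxSet S R'} : Finset (Finset X)) =
      Icc {x} (strictUpper R x)ᶜ ∆ Icc {x} (strictUpper R' x)ᶜ := by
  ext S
  simp only [mem_filter, mem_univ, true_and, mem_symmDiff, mem_MaxSet_iff_mem_Icc]

theorem card_ne_and_not_asymPart (R R' : X → X → Prop) (x : X) :
    #{a | a ≠ x ∧ ¬ asymPart R a x ∧ ¬ asymPart R' a x} =
      #((strictUpper R x)ᶜ ∩ (strictUpper R' x)ᶜ) - 1 := by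
  have hx : x ∈ (strictUpper R x)ᶜ ∩ (strictUpper R' x)ᶜ :=
    singleton_subset_iff.1 <| subset_inter (singleton_subset_compl_strictUpper R x)
      (singleton_subset_compl_strictUpper R' x)
  rw [← card_erase_of_mem hx]
  congr 1
  ext a
  simp only [mem_filter, mem_univ, true_and, mem_erase, mem_inter, mem_compl, mem_strictUpper]

theorem Dmu_eq_sum_card_mul (w : X → ℝ) (R R' : X → X → Prop) :
    Dmu w R R' =
      ∑ x, #(Icc {x} (strictUpper R x)ᶜ ∆ Icc {x} (strictUpper R' x)ᶜ) * w x := by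
  simp only [Dmu, sum_sum_eq_sum_card_nsmul, filter_mem_symmDiff_MaxSet, nsmul_eq_mul]

end StrictUpper

theorem stmt_11_general {X : Type*} [Fintype X] [DecidableEq X]
    (w : X → ℝ) (R R' : X → X → Prop) :
    Dmu w R R' = ∑ x : X,
      ((2 : ℝ) ^ (Fintype.card X - (Finset.univ.filter fun a => asymPart R' a x).card - 1)
        + (2 : ℝ) ^ (Fintype.card X - (Finset.univ.filter fun a => asymPart R a x).card - 1)
        - (2 : ℝ) ^ ((Finset.univ.filter fun a =>
            a ≠ x ∧ ¬ asymPart R a x ∧ ¬ asymPart R' a x).card + 1)) * w x := by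
  rw [Dmu_eq_sum_card_mul]
  refine sum_congr rfl fun x _ => ?_
  rw [card_Icc_symmDiff_Icc (singleton_subset_compl_strictUpper R x)
      (singleton_subset_compl_strictUpper R' x),
    card_ne_and_not_asymPart, card_compl, card_compl, card_singleton, strictUpper, strictUpper,
    add_comm (2 ^ _) (2 ^ _)]

/-- the alternative "local" formula for `D^μ`. -/
theorem stmt_11 {X : Type*} [Fintype X] [DecidableEq X]
    (w : X → ℝ) (hw : ∀ x, 0 ≤ w x)
    (R R' : X → X → Prop) (hR : AcyclicOrd R) (hR' : AcyclicOrd R') :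
    Dmu w R R' = ∑ x : X,
      ((2 : ℝ) ^ (Fintype.card X - (Finset.univ.filter fun a => asymPart R' a x).card - 1)
        + (2 : ℝ) ^ (Fintype.card X - (Finset.univ.filter fun a => asymPart R a x).card - 1)
        - (2 : ℝ) ^ ((Finset.univ.filter fun a =>
            a ≠ x ∧ ¬ asymPart R a x ∧ ¬ asymPart R' a x).card + 1)) * w x :=
  stmt_11_general w R R'
end

section
/- Let X be a finite set with |X| = n and let ≿ and ⊵ be linear orders on X with asymmetric parts ≻ and ⊳. Then D(≿,⊵) = 2(2^n − 1) − Σ_{x ∈ X} 2^{|x^{↓,≻} ∩ x^{↓,⊳}| + 1}, where x^{↓,≻} := {a ∈ X : x ≻ a} and x^{↓,⊳} := {a ∈ X : x ⊳ a}. -/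
open Classical Finset symmDiff

section AsymPart

variable {X : Type*} {R : X → X → Prop}

instance irrefl_asymPart : Std.Irrefl (asymPart R) where
  irrefl _ h := h.2 h.1

instance isTrans_asymPart [IsTrans X R] : IsTrans X (asymPart R) where
  trans _ _ _ hxy hyz :=
    ⟨_root_.trans hxy.1 hyz.1, fun hzx => hxy.2 (_root_.trans hyz.1 hzx)⟩

instance trichotomous_asymPart [Std.Antisymm R] [Std.Total R] :
    Std.Trichotomous (asymPart R) where
  trichotomous x y hxy hyx := by
    rcases total_of R x y with h | h
    · exact antisymm h (not_not.1 fun h' => hxy ⟨h, h'⟩)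
    · exact antisymm (not_not.1 fun h' => hyx ⟨h, h'⟩) h

theorem ne_and_not_asymPart_iff [Std.Trichotomous (asymPart R)] {x y : X} :
    y ≠ x ∧ ¬ asymPart R y x ↔ asymPart R x y := by
  constructor
  · rintro ⟨hne, hyx⟩
    exact ((trichotomous_of (asymPart R) y x).resolve_left hyx).resolve_left hne
  · intro hxy
    exact ⟨(ne_of_irrefl hxy).symm, fun hyx => hxy.2 hyx.1⟩

end AsymPart

section MaxSet

variable {X : Type*} [DecidableEq X] {R R' : X → X → Prop} {S : Finset X} {x : X}

theorem mem_maxSet : x ∈ MaxSet S R ↔ x ∈ S ∧ ∀ y ∈ S, ¬ asymPart R y x :=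
  mem_filter

theorem maxSet_nonempty [IsTrans X (asymPart R)] (hS : S.Nonempty) :
    (MaxSet S R).Nonempty := by
  have : IsStrictOrder X (asymPart R) := {}
  obtain ⟨x, hxS⟩ := hS
  obtain ⟨⟨m, hmS⟩, -, hm⟩ :=
    (S.wellFoundedOn (r := asymPart R)).has_min Set.univ ⟨⟨x, hxS⟩, trivial⟩
  exact ⟨m, mem_maxSet.2 ⟨hmS, fun y hyS => hm ⟨y, hyS⟩ trivial⟩⟩

theorem card_maxSet_le_one [Std.Trichotomous (asymPart R)] : #(MaxSet S R) ≤ 1 := by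
  refine card_le_one.2 fun x hx y hy => ?_
  rw [mem_maxSet] at hx hy
  exact Std.Trichotomous.trichotomous x y (hy.2 x hx.1) (hx.2 y hy.1)

theorem card_maxSet_eq_one [IsTrans X (asymPart R)] [Std.Trichotomous (asymPart R)]
    (hS : S.Nonempty) :
    #(MaxSet S R) = 1 :=
  card_maxSet_le_one.antisymm (maxSet_nonempty hS).card_pos

theorem mem_maxSet_inter_maxSet_iff_mem_Icc [Fintype X] :
    x ∈ MaxSet S R ∩ MaxSet S R' ↔
      S ∈ Icc {x} (insert x ({y | y ≠ x ∧ ¬ asymPart R y x ∧ ¬ asymPart R' y x} : Finset X)) := by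
  have hR := irrefl_of (asymPart R) x
  have hR' := irrefl_of (asymPart R') x
  simp only [mem_inter, mem_maxSet, mem_Icc, subset_iff, mem_insert, mem_filter_univ]
  grind

end MaxSet

section Counting

variable {X : Type*} [Fintype X] [DecidableEq X] (R R' : X → X → Prop)

theorem sum_card_maxSet_add_one [IsTrans X (asymPart R)] [Std.Trichotomous (asymPart R)] :
    ∑ S : Finset X, #(MaxSet S R) + 1 = 2 ^ Fintype.card X := by
  have card_maxSet_empty : #(MaxSet ∅ R) = 0 := rfl
  have sum_nonempty : ∑ S ∈ univ.erase (∅ : Finset X), #(MaxSet S R) = 2 ^ Fintype.card X - 1 := by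
    rw [sum_congr rfl fun S hS => card_maxSet_eq_one (nonempty_iff_ne_empty.2 (ne_of_mem_erase hS)),
      ← card_eq_sum_ones, card_erase_of_mem (mem_univ _), card_univ, Fintype.card_finset]
  rw [← add_sum_erase _ _ (mem_univ ∅), card_maxSet_empty, zero_add, sum_nonempty]
  exact Nat.sub_add_cancel Nat.one_le_two_pow

theorem sum_card_maxSet_inter_maxSet :
    ∑ S : Finset X, #(MaxSet S R ∩ MaxSet S R') =
      ∑ x : X, 2 ^ #{y | y ≠ x ∧ ¬ asymPart R y x ∧ ¬ asymPart R' y x} :=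
  calc
    ∑ S : Finset X, #(MaxSet S R ∩ MaxSet S R')
        = ∑ S : Finset X, #{x | x ∈ MaxSet S R ∩ MaxSet S R'} := by simp only [filter_univ_mem]
    _ = ∑ x : X, #{S : Finset X | x ∈ MaxSet S R ∩ MaxSet S R'} :=
        sum_card_bipartiteAbove_eq_sum_card_bipartiteBelow _
    _ = ∑ x : X, 2 ^ #{y | y ≠ x ∧ ¬ asymPart R y x ∧ ¬ asymPart R' y x} := by
        refine sum_congr rfl fun x _ => ?_
        simp only [mem_maxSet_inter_maxSet_iff_mem_Icc, filter_univ_mem]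
        rw [card_Icc_finset (by simp), card_insert_of_notMem (by simp), card_singleton,
          Nat.add_sub_cancel]

theorem sum_card_maxSet_inter_maxSet_of_trichotomous
    [Std.Trichotomous (asymPart R)] [Std.Trichotomous (asymPart R')] :
    ∑ S : Finset X, #(MaxSet S R ∩ MaxSet S R') =
      ∑ x : X, 2 ^ #{a | asymPart R x a ∧ asymPart R' x a} := by
  simp only [sum_card_maxSet_inter_maxSet, and_and_left, ne_and_not_asymPart_iff]

theorem Dtop_add_two_mul_sum_card_inter :
    Dtop R R' + 2 * ∑ S : Finset X, #(MaxSet S R ∩ MaxSet S R') =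
      ∑ S : Finset X, #(MaxSet S R) + ∑ S : Finset X, #(MaxSet S R') := by
  simp only [Dtop, mul_sum, ← sum_add_distrib, card_symmDiff_add_two_mul_card_inter]

end Counting

/-- the formula for the top-difference distance between two linear
orders. -/
theorem stmt_12 {X : Type*} [Fintype X] [DecidableEq X]
    (R R' : X → X → Prop)
    (hR : Reflexive R ∧ Transitive R ∧ AntiSymmetric R ∧ Total R)
    (hR' : Reflexive R' ∧ Transitive R' ∧ AntiSymmetric R' ∧ Total R') :
    (Dtop R R' : ℤ) = 2 * (2 ^ Fintype.card X - 1)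
      - ∑ x : X,
          2 ^ ((Finset.univ.filter fun a => asymPart R x a ∧ asymPart R' x a).card + 1) := by
  have : IsLinearOrder X R :=
    { refl := hR.1, trans := @hR.2.1, antisymm := @hR.2.2.1, total := hR.2.2.2 }
  have : IsLinearOrder X R' :=
    { refl := hR'.1, trans := @hR'.2.1, antisymm := @hR'.2.2.1, total := hR'.2.2.2 }
  have hD := Dtop_add_two_mul_sum_card_inter R R'
  have hM := sum_card_maxSet_add_one R
  have hM' := sum_card_maxSet_add_one R'
  rw [sum_card_maxSet_inter_maxSet_of_trichotomous] at hD
  zify at hD hM hM'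
  simp only [pow_succ', ← mul_sum]
  linarith
end

section
/- Let X = {x_1,…,x_n} be a finite set with n ≥ 2 elements and let m ∈ {1,…,n−1}. Let ≿ be the total preorder on X with x_1 ∼ ⋯ ∼ x_m ≻ x_{m+1} ≻ ⋯ ≻ x_n and ≿' the total preorder on X with x_{m+1} ∼' ⋯ ∼' x_n ≻' x_1 ≻' ⋯ ≻' x_m (where ≻, ∼ and ≻', ∼' are the respective asymmetric and symmetric parts). Then D(≿,≿') = n·2^{n−1} + 2 − 2^m − 2^{n−m}. -/
open Classical Finset symmDiff

/-- Rank function of the total preorder `x_1 ∼ ⋯ ∼ x_m ≻ x_{m+1} ≻ ⋯ ≻ x_n`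
(smaller rank = better). -/
def rnkA (m : ℕ) {n : ℕ} (i : Fin n) : ℕ := if (i : ℕ) < m then 0 else (i : ℕ) - m + 1

/-- Rank function of the total preorder `x_{m+1} ∼ ⋯ ∼ x_n ≻ x_1 ≻ ⋯ ≻ x_m`
(smaller rank = better). -/
def rnkB (m : ℕ) {n : ℕ} (i : Fin n) : ℕ := if m ≤ (i : ℕ) then 0 else (i : ℕ) + 1

/-!
Let `A = {x_1, …, x_m}`. A nonempty set `S` that meets both `A` and `Aᶜ` has the maximal sets `S ∩ A`
and `S ∩ Aᶜ`, whose symmetric difference is `S`. If instead `S` lies in `A` or in `Aᶜ`, then one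
preorder is indifferent on all of `S` and the other selects a single element, so the symmetric
difference has `#S - 1` elements. Hence `D` is `∑ #S = n * 2 ^ (n - 1)` less the number of nonempty
subsets of `A` and of `Aᶜ`.
-/

section TiedTop

variable {X α β : Type*} [LinearOrder α] [LinearOrder β]

/-- The total preorder in which all elements of `A` are tied at the top and the elements outside `A`
follow, ordered by `r` (smaller rank = better). -/
def TiedTop (A : Finset X) (r : X → α) : X → X → Prop :=
  fun x y => x ∈ A ∨ y ∉ A ∧ r x ≤ r y

theorem asymPart_tiedTop_iff {A : Finset X} {r : X → α} {x y : X} :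
    asymPart (TiedTop A r) x y ↔ y ∉ A ∧ (x ∈ A ∨ r x < r y) := by
  simp only [asymPart, TiedTop, ← not_le]
  grind

variable [DecidableEq X] {S A : Finset X} {r : X → α} {r' : X → β}

theorem maxSet_tiedTop_of_not_disjoint (h : ¬ Disjoint S A) :
    MaxSet S (TiedTop A r) = S ∩ A := by
  obtain ⟨a, haS, haA⟩ := not_disjoint_iff.mp h
  ext x
  simp only [MaxSet, mem_filter, mem_inter, asymPart_tiedTop_iff, and_congr_right_iff]
  exact fun _ => ⟨fun hx => by_contra fun hxA => hx a haS ⟨hxA, .inl haA⟩,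
    fun hxA _ _ hlt => hlt.1 hxA⟩

theorem exists_maxSet_tiedTop_eq_singleton (hr : Set.InjOn r S) (hS : S.Nonempty)
    (h : Disjoint S A) : ∃ x ∈ S, MaxSet S (TiedTop A r) = {x} := by
  obtain ⟨x, hxS, hmin⟩ := S.exists_min_image r hS
  refine ⟨x, hxS, ?_⟩
  ext y
  simp only [MaxSet, mem_filter, asymPart_tiedTop_iff, mem_singleton]
  constructor
  · rintro ⟨hyS, hy⟩
    have hyx : r y ≤ r x :=
      not_lt.mp fun hlt => hy x hxS ⟨disjoint_left.mp h hyS, .inr hlt⟩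
    exact hr hyS hxS (hyx.antisymm (hmin y hyS))
  · rintro rfl
    refine ⟨hxS, fun z hzS ⟨_, hz⟩ => ?_⟩
    exact hz.elim (disjoint_left.mp h hzS) (hmin z hzS).not_gt

variable [Fintype X]

theorem symmDiff_maxSet_tiedTop_of_not_subset (hA : ¬ S ⊆ A) (hA' : ¬ S ⊆ Aᶜ) :
    MaxSet S (TiedTop A r) ∆ MaxSet S (TiedTop Aᶜ r') = S := by
  rw [maxSet_tiedTop_of_not_disjoint (mt subset_compl_iff_disjoint_right.mpr hA'),
    maxSet_tiedTop_of_not_disjoint (mt disjoint_compl_right_iff.mp hA)]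
  ext x
  simp only [mem_symmDiff, mem_inter, mem_compl]
  tauto

theorem card_symmDiff_maxSet_tiedTop_of_subset (hr' : Set.InjOn r' A) (hS : S.Nonempty)
    (hA : S ⊆ A) : #(MaxSet S (TiedTop A r) ∆ MaxSet S (TiedTop Aᶜ r')) + 1 = #S := by
  have hmeet : ¬ Disjoint S A := fun h => hS.ne_empty (disjoint_self.mp (h.mono_right hA))
  obtain ⟨x, hxS, hx⟩ := exists_maxSet_tiedTop_eq_singleton
    (hr'.mono (coe_subset.mpr hA)) hS (disjoint_compl_right_iff.mpr hA)
  have herase : S ∆ {x} = S.erase x := by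
    rw [symmDiff_of_ge (singleton_subset_iff.mpr hxS), sdiff_singleton_eq_erase]
  rw [maxSet_tiedTop_of_not_disjoint hmeet, inter_eq_left.mpr hA, hx, herase,
    card_erase_add_one hxS]

theorem card_symmDiff_maxSet_tiedTop (hr : Set.InjOn r ↑Aᶜ) (hr' : Set.InjOn r' A)
    (S : Finset X) :
    #(MaxSet S (TiedTop A r) ∆ MaxSet S (TiedTop Aᶜ r')) + (if S ⊆ A then 1 else 0)
      + (if S ⊆ Aᶜ then 1 else 0) = #S + if S = ∅ then 2 else 0 := by
  rcases S.eq_empty_or_nonempty with rfl | hS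
  · simp [MaxSet]
  have hnot_both : S ⊆ A → ¬ S ⊆ Aᶜ := fun hA hA' =>
    hS.ne_empty (disjoint_self.mp ((subset_compl_iff_disjoint_right.mp hA').mono_right hA))
  by_cases hA : S ⊆ A
  · simpa [hA, hnot_both hA, hS.ne_empty] using card_symmDiff_maxSet_tiedTop_of_subset hr' hS hA
  by_cases hA' : S ⊆ Aᶜ
  · have hswap := card_symmDiff_maxSet_tiedTop_of_subset (r := r') (r' := r) hr hS hA'
    rw [compl_compl, symmDiff_comm] at hswap
    simpa [hA, hA', hS.ne_empty] using hswap
  · simp [hA, hA', hS.ne_empty, symmDiff_maxSet_tiedTop_of_not_subset hA hA']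

end TiedTop

theorem sum_powerset_card {X : Type*} (s : Finset X) :
    ∑ t ∈ s.powerset, #t = #s * 2 ^ (#s - 1) := by
  rw [sum_powerset_apply_card (fun k => k), ← Nat.sum_range_mul_choose]
  simp only [smul_eq_mul, mul_comm]

theorem Dtop_tiedTop_compl {X α β : Type*} [LinearOrder α] [LinearOrder β] [Fintype X]
    [DecidableEq X] {A : Finset X} {r : X → α} {r' : X → β} (hr : Set.InjOn r ↑Aᶜ)
    (hr' : Set.InjOn r' A) :
    Dtop (TiedTop A r) (TiedTop Aᶜ r') + 2 ^ #A + 2 ^ #Aᶜ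
      = Fintype.card X * 2 ^ (Fintype.card X - 1) + 2 := by
  have hcount (B : Finset X) : ∑ S : Finset X, (if S ⊆ B then 1 else 0) = 2 ^ #B := by
    rw [← card_filter, filter_subset_univ, card_powerset]
  calc Dtop (TiedTop A r) (TiedTop Aᶜ r') + 2 ^ #A + 2 ^ #Aᶜ
    _ = ∑ S : Finset X, (#(MaxSet S (TiedTop A r) ∆ MaxSet S (TiedTop Aᶜ r'))
          + (if S ⊆ A then 1 else 0) + if S ⊆ Aᶜ then 1 else 0) := by
      rw [sum_add_distrib, sum_add_distrib, hcount, hcount, Dtop]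
    _ = ∑ S : Finset X, (#S + if S = ∅ then 2 else 0) :=
      sum_congr rfl fun S _ => card_symmDiff_maxSet_tiedTop hr hr' S
    _ = Fintype.card X * 2 ^ (Fintype.card X - 1) + 2 := by
      rw [sum_add_distrib, ← powerset_univ, sum_powerset_card, card_univ, powerset_univ,
        sum_ite_eq' univ ∅, if_pos (mem_univ _)]

section Rank

variable {n : ℕ} (m : ℕ) (i j : Fin n)

theorem rnkA_le_rnkA_iff :
    rnkA m i ≤ rnkA m j ↔ (i : ℕ) < m ∨ ¬ (j : ℕ) < m ∧ i ≤ j := by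
  simp only [rnkA, Fin.le_def]
  split_ifs <;> omega

theorem rnkB_le_rnkB_iff :
    rnkB m i ≤ rnkB m j ↔ ¬ (i : ℕ) < m ∨ (j : ℕ) < m ∧ i ≤ j := by
  simp only [rnkB, Fin.le_def]
  split_ifs <;> omega

end Rank

/-- for `X = {x_1,…,x_n}` and `1 ≤ m ≤ n−1`, the distance between the
total preorders `x_1 ∼ ⋯ ∼ x_m ≻ x_{m+1} ≻ ⋯ ≻ x_n` and
`x_{m+1} ∼' ⋯ ∼' x_n ≻' x_1 ≻' ⋯ ≻' x_m` equals `n·2^{n−1} + 2 − 2^m − 2^{n−m}`. -/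
theorem stmt_15 {X : Type*} [Fintype X] [DecidableEq X]
    {n m : ℕ} (hn : 2 ≤ n) (hm1 : 1 ≤ m) (hm2 : m ≤ n - 1)
    (e : Fin n ≃ X) :
    (Dtop (fun x y => rnkA m (e.symm x) ≤ rnkA m (e.symm y))
          (fun x y => rnkB m (e.symm x) ≤ rnkB m (e.symm y)) : ℤ)
      = (n : ℤ) * 2 ^ (n - 1) + 2 - 2 ^ m - 2 ^ (n - m) := by
  set A : Finset X := ({i : Fin n | (i : ℕ) < m} : Finset (Fin n)).map e.toEmbedding with hA
  have mem_A (x : X) : x ∈ A ↔ (e.symm x : ℕ) < m := by simp [hA, mem_map_equiv]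
  have hcardX : Fintype.card X = n := by simpa using (Fintype.card_congr e).symm
  have hcardA : #A = m := by rw [hA, card_map, Fin.card_filter_val_lt]; omega
  have hRankA : (fun x y => rnkA m (e.symm x) ≤ rnkA m (e.symm y)) = TiedTop A e.symm := by
    ext x y
    simp only [TiedTop, mem_A, rnkA_le_rnkA_iff]
  have hRankB : (fun x y => rnkB m (e.symm x) ≤ rnkB m (e.symm y)) = TiedTop Aᶜ e.symm := by
    ext x y
    simp only [TiedTop, mem_compl, mem_A, not_not, rnkB_le_rnkB_iff]
  have hD := Dtop_tiedTop_compl (A := A) e.symm.injective.injOn e.symm.injective.injOn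
  rw [card_compl, hcardA, hcardX] at hD
  rw [hRankA, hRankB]
  zify at hD
  linarith
end

section
/- Let X be a finite set, μ a positive measure on 2^X, and ≿ an antisymmetric acyclic order on X. Then for every transitive extension ⊵ of ≿, D^μ(≿,⊵) = D^μ(≿, tran(≿)) + D^μ(tran(≿), ⊵); in particular, D^μ(≿, tran(≿)) ≤ D^μ(≿,⊵) for every transitive extension ⊵ of ≿, so the transitive closure tran(≿) is a best transitive extension of ≿ with respect to D^μ. -/
open Classical Finset symmDiff

/-- `Q` is a transitive extension of the acyclic order `R`. -/
def TransExt {X : Type*} (R Q : X → X → Prop) : Prop :=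
  Reflexive Q ∧ Transitive Q ∧ ∀ x y, asymPart R x y → asymPart Q x y

/-!
Every relation whose strict part contains that of `R` has smaller maximal sets, so along a chain
`R^> ⊆ T^> ⊆ Q^>` the symmetric differences defining `Dmu` are nested differences and telescope.
It remains to see that `T = TransGen R` fits into such a chain. Antisymmetry and the reflexivity of
`Q` give `R ⊆ Q`. If `x` and `y` are joined by an `R`-path and also `Q y x`, then the whole path
lies in one `Q`-indifference class, so none of its steps is strict in `R`; the path can be reversed,
and `T y x`.
-/

section MaxSet

variable {X : Type*} [DecidableEq X] {R Q : X → X → Prop}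

theorem maxSet_subset_of_asymPart_le (h : asymPart R ≤ asymPart Q) (S : Finset X) :
    MaxSet S Q ⊆ MaxSet S R :=
  Finset.monotone_filter_right S fun x _ hx y hy hyx => hx y hy (h y x hyx)

end MaxSet

section Dmu

variable {X : Type*} [Fintype X] [DecidableEq X] {w : X → ℝ} {R T Q : X → X → Prop}

theorem dmu_nonneg (hw : 0 ≤ w) (R Q : X → X → Prop) : 0 ≤ Dmu w R Q :=
  Finset.sum_nonneg fun _ _ => Finset.sum_nonneg fun x _ => hw x

theorem dmu_eq_sum_sub (w : X → ℝ) (h : asymPart R ≤ asymPart Q) :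
    Dmu w R Q = ∑ S : Finset X, (∑ x ∈ MaxSet S R, w x - ∑ x ∈ MaxSet S Q, w x) := by
  refine Finset.sum_congr rfl fun S _ => ?_
  have hsub : MaxSet S Q ⊆ MaxSet S R := maxSet_subset_of_asymPart_le h S
  rw [symmDiff_of_ge hsub, Finset.sum_sdiff_eq_sub hsub]

theorem dmu_add_dmu (w : X → ℝ) (hRT : asymPart R ≤ asymPart T)
    (hTQ : asymPart T ≤ asymPart Q) : Dmu w R T + Dmu w T Q = Dmu w R Q := by
  simp only [dmu_eq_sum_sub w hRT, dmu_eq_sum_sub w hTQ, dmu_eq_sum_sub w (hRT.trans hTQ),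
    Finset.sum_sub_distrib, sub_add_sub_cancel]

end Dmu

section IsOrderExtension

variable {X : Type*} {R Q : X → X → Prop}

/-- `Q` is an extension of `R` in Suzumura's sense: it contains `R` and keeps strict comparisons
strict. Unlike `TransExt`, it neither asks for transitivity nor allows an `R`-indifference to be
dropped. -/
structure IsOrderExtension (R Q : X → X → Prop) : Prop where
  le : R ≤ Q
  asymPart_le : asymPart R ≤ asymPart Q

theorem TransExt.isTrans (hQ : TransExt R Q) : IsTrans X Q :=
  ⟨fun _ _ _ hxy hyz => hQ.2.1 hxy hyz⟩

theorem TransExt.isOrderExtension [Std.Antisymm R] (hQ : TransExt R Q) :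
    IsOrderExtension R Q where
  le x y hxy := by
    obtain ⟨hrefl, -, hstrict⟩ := hQ
    by_cases hyx : R y x
    · exact antisymm_of R hxy hyx ▸ hrefl x
    · exact (hstrict x y ⟨hxy, hyx⟩).1
  asymPart_le := hQ.2.2

namespace IsOrderExtension

theorem symm_of_rel (h : IsOrderExtension R Q) {x y : X} (hxy : R x y) (hyx : Q y x) : R y x :=
  by_contra fun hnot => (h.asymPart_le x y ⟨hxy, hnot⟩).2 hyx

theorem transGen_le [IsTrans X Q] (h : IsOrderExtension R Q) : Relation.TransGen R ≤ Q :=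
  Relation.transGen_minimal h.le

theorem transGen_symm_of_rel [IsTrans X Q] (h : IsOrderExtension R Q) {x y : X}
    (hxy : Relation.TransGen R x y) (hyx : Q y x) : Relation.TransGen R y x := by
  induction hxy with
  | single hxy => exact .single (h.symm_of_rel hxy hyx)
  | @tail b c hxb hbc ih =>
    have hcb : Q c b := trans_of Q hyx (h.transGen_le x b hxb)
    have hbx : Q b x := trans_of Q (h.le b c hbc) hyx
    exact .head (h.symm_of_rel hbc hcb) (ih hbx)

theorem asymPart_le_asymPart_transGen [IsTrans X Q] (h : IsOrderExtension R Q) :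
    asymPart R ≤ asymPart (Relation.TransGen R) :=
  fun x y hxy => ⟨.single hxy.1, fun hyx => (h.asymPart_le x y hxy).2 (h.transGen_le y x hyx)⟩

theorem asymPart_transGen_le [IsTrans X Q] (h : IsOrderExtension R Q) :
    asymPart (Relation.TransGen R) ≤ asymPart Q :=
  fun x y hxy => ⟨h.transGen_le x y hxy.1, fun hyx => hxy.2 (h.transGen_symm_of_rel hxy.1 hyx)⟩

end IsOrderExtension

end IsOrderExtension

theorem stmt_16_general {X : Type*} [Fintype X] [DecidableEq X] {w : X → ℝ} (hw : 0 ≤ w)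
    {R Q : X → X → Prop} [IsTrans X Q] (hRQ : IsOrderExtension R Q) :
    Dmu w R Q = Dmu w R (Relation.TransGen R) + Dmu w (Relation.TransGen R) Q ∧
    Dmu w R (Relation.TransGen R) ≤ Dmu w R Q := by
  have hadd : Dmu w R (Relation.TransGen R) + Dmu w (Relation.TransGen R) Q = Dmu w R Q :=
    dmu_add_dmu w hRQ.asymPart_le_asymPart_transGen hRQ.asymPart_transGen_le
  exact ⟨hadd.symm, hadd ▸ le_add_of_nonneg_right (dmu_nonneg hw _ Q)⟩

/-- Theorem 5.1: the transitive closure of an antisymmetric acyclic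
order `≿` is its unique-best transitive extension relative to `D^μ`: for every
transitive extension `⊵`, `D^μ(≿,⊵) = D^μ(≿,tran(≿)) + D^μ(tran(≿),⊵)`, and in
particular `D^μ(≿,tran(≿)) ≤ D^μ(≿,⊵)`. -/
theorem stmt_16 {X : Type*} [Fintype X] [DecidableEq X]
    (w : X → ℝ) (hw : ∀ x, 0 ≤ w x)
    (R : X → X → Prop) (hR : AcyclicOrd R) (hanti : AntiSymmetric R)
    (Q : X → X → Prop) (hQ : TransExt R Q) :
    Dmu w R Q = Dmu w R (Relation.TransGen R) + Dmu w (Relation.TransGen R) Q ∧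
    Dmu w R (Relation.TransGen R) ≤ Dmu w R Q := by
  have : Std.Antisymm R := ⟨fun _ _ hxy hyx => hanti hxy hyx⟩
  have : IsTrans X Q := hQ.isTrans
  exact stmt_16_general hw hQ.isOrderExtension
end

section
/- Let X be a finite set and ≿ an antisymmetric acyclic order on X with asymmetric part ≻. Then the transitive closure tran(≿) is a partial order on X, and for every transitive extension ⊵ of ≿ (with asymmetric part ⊳) one has ≻ ⊆ tran(≿)^> ⊆ ⊳, where tran(≿)^> is the asymmetric part of tran(≿). -/
open Classical Finset symmDiff

/-!
In an antisymmetric relation every related pair is either equal or strictly related, so a chain of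
`≿` becomes, after dropping its constant steps, a chain of `≻`. A pair of distinct points related
both ways by `tran(≿)`, or a strict pair reversed by it, would therefore close up into a closed walk
of `≻`; shortcutting its repetitions gives a cycle of pairwise distinct points, which acyclicity
forbids. Finally, `⊳` is transitive and contains `≻`, hence contains every chain of `≻`.
-/

open Relation

section SimpleCycle

variable {α : Type*} {r : α → α → Prop} {a b : α}

theorem exists_nodup_isChain_of_reflTransGen (h : ReflTransGen r a b) :
    ∃ l : List α, (a :: l).IsChain r ∧ (a :: l).Nodup ∧
      (a :: l).getLast (List.cons_ne_nil a l) = b := by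
  induction h using ReflTransGen.head_induction_on with
  | refl => exact ⟨[], by simp⟩
  | @head a c hac _ ih =>
    obtain ⟨l, hchain, hnodup, hlast⟩ := ih
    by_cases ha : a ∈ c :: l
    · obtain ⟨s, t, hst⟩ := List.append_of_mem ha
      simp only [hst] at hchain hnodup hlast
      exact ⟨t, hchain.right_of_append, hnodup.of_append_right, by simpa using hlast⟩
    · exact ⟨c :: l, hchain.cons_cons hac, List.nodup_cons.2 ⟨ha, hnodup⟩, by simpa using hlast⟩

theorem exists_injective_cycle_of_transGen_self (h : TransGen r a a) :
    ∃ (k : ℕ) (z : Fin (k + 1) → α), Function.Injective z ∧ ∀ i, r (z i) (z (i + 1)) := by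
  obtain ⟨b, hab, hba⟩ := TransGen.tail'_iff.1 h
  obtain ⟨l, hchain, hnodup, hlast⟩ := exists_nodup_isChain_of_reflTransGen hab
  refine ⟨l.length, (a :: l).get, List.nodup_iff_injective_get.1 hnodup, fun i => ?_⟩
  induction i using Fin.lastCases with
  | last =>
    have hget : (a :: l).get (Fin.last l.length) = b := by
      simpa [List.getLast_eq_getElem] using hlast
    rw [hget, Fin.last_add_one]
    exact hba
  | cast i =>
    rw [Fin.coeSucc_eq_succ]
    exact List.isChain_iff_getElem.1 hchain i (by simp)

end SimpleCycle

section AsymPart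

variable {X : Type*} {R Q : X → X → Prop} {x y : X}

instance asymPart.isTrans [IsTrans X Q] : IsTrans X (asymPart Q) where
  trans _ _ _ hxy hyz :=
    ⟨trans_of Q hxy.1 hyz.1, fun hzx => hxy.2 (trans_of Q hyz.1 hzx)⟩

theorem AcyclicRel.not_transGen_asymPart_self (hR : AcyclicRel R) (x : X) :
    ¬ TransGen (asymPart R) x x :=
  fun h => hR (exists_injective_cycle_of_transGen_self h)

variable [Std.Antisymm R]

theorem eq_or_asymPart_of_rel (h : R x y) : x = y ∨ asymPart R x y :=
  or_iff_not_imp_right.2 fun hxy => antisymm h (not_not.1 fun hyx => hxy ⟨h, hyx⟩)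

theorem reflTransGen_asymPart_of_transGen (h : TransGen R x y) :
    ReflTransGen (asymPart R) x y := by
  refine ReflTransGen.lift' id (fun a b hab => ?_) _ _ h.to_reflTransGen
  obtain rfl | hab := eq_or_asymPart_of_rel hab
  exacts [.refl, .single hab]

theorem transGen_asymPart_of_asymPart_transGen (h : asymPart (TransGen R) x y) :
    TransGen (asymPart R) x y := by
  obtain rfl | hxy := reflTransGen_iff_eq_or_transGen.1 (reflTransGen_asymPart_of_transGen h.1)
  exacts [(h.2 h.1).elim, hxy]

theorem AcyclicRel.antisymm_transGen (hR : AcyclicRel R) : Std.Antisymm (TransGen R) where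
  antisymm x y hxy hyx := by
    obtain rfl | hxy' := reflTransGen_iff_eq_or_transGen.1 (reflTransGen_asymPart_of_transGen hxy)
    · rfl
    · have hcycle := hxy'.trans_left (reflTransGen_asymPart_of_transGen hyx)
      exact (hR.not_transGen_asymPart_self x hcycle).elim

theorem AcyclicRel.asymPart_transGen_of_asymPart (hR : AcyclicRel R) (h : asymPart R x y) :
    asymPart (TransGen R) x y :=
  ⟨.single h.1, fun hyx =>
    hR.not_transGen_asymPart_self x (.head' h (reflTransGen_asymPart_of_transGen hyx))⟩

theorem asymPart_of_asymPart_transGen [IsTrans X Q] (hRQ : asymPart R ≤ asymPart Q)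
    (h : asymPart (TransGen R) x y) : asymPart Q x y := by
  rw [← transGen_eq_self (r := asymPart Q)]
  exact TransGen.mono hRQ _ _ (transGen_asymPart_of_asymPart_transGen h)

end AsymPart

theorem stmt_17_general {X : Type*}
    (R : X → X → Prop) (hR : AcyclicOrd R) (hanti : AntiSymmetric R) :
    (Reflexive (Relation.TransGen R) ∧ Transitive (Relation.TransGen R) ∧
      AntiSymmetric (Relation.TransGen R)) ∧
    (∀ x y, asymPart R x y → asymPart (Relation.TransGen R) x y) ∧
    (∀ Q : X → X → Prop, TransExt R Q →
      ∀ x y, asymPart (Relation.TransGen R) x y → asymPart Q x y) := by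
  have : Std.Antisymm R := ⟨hanti⟩
  refine ⟨⟨fun x => .single (hR.1 x), fun _ _ _ => TransGen.trans, ?_⟩, ?_, ?_⟩
  · exact hR.2.antisymm_transGen.antisymm
  · exact fun _ _ => hR.2.asymPart_transGen_of_asymPart
  · rintro Q ⟨-, htrans, hRQ⟩ x y
    have : IsTrans X Q := ⟨htrans⟩
    exact asymPart_of_asymPart_transGen hRQ

/-- Lemma 5.2: for an antisymmetric acyclic order `≿` on a finite set,
`tran(≿)` is a partial order, and `≻ ⊆ tran(≿)^> ⊆ ⊳` for every transitive extension
`⊵` of `≿`. -/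
theorem stmt_17 {X : Type*} [Fintype X]
    (R : X → X → Prop) (hR : AcyclicOrd R) (hanti : AntiSymmetric R) :
    (Reflexive (Relation.TransGen R) ∧ Transitive (Relation.TransGen R) ∧
      AntiSymmetric (Relation.TransGen R)) ∧
    (∀ x y, asymPart R x y → asymPart (Relation.TransGen R) x y) ∧
    (∀ Q : X → X → Prop, TransExt R Q →
      ∀ x y, asymPart (Relation.TransGen R) x y → asymPart Q x y) :=
  stmt_17_general R hR hanti
end
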